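/- Let p ≥ 2 and q ≥ 0 with n := p + 2q ≥ 3, and let U be the abelian group defined (written additively) as the quotient of the free abelian group ℤ^{p+2q} on generators x₁, …, x_p, y₁, z₁, …, y_q, z_q by the subgroup generated by the elements 2x₁ − 2x_i for 2 ≤ i ≤ p, the elements 2x₁ − (y_j + z_j) for 1 ≤ j ≤ q, and the element 2x₁ − (x₁ + ⋯ + x_p + (y₁ + z₁) + ⋯ + (y_q + z_q)). Then U is isomorphic to ℤ^q × ℤ/(2n−4)ℤ × (ℤ/2ℤ)^{p−2}. -/

import Mathlib

/-- The free abelian group on the `p + 2q` generators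
`x₁, …, x_p, y₁, z₁, …, y_q, z_q`. -/
abbrev FreeAb19 (p q : ℕ) : Type := (Fin p ⊕ (Fin q ⊕ Fin q)) →₀ ℤ

/-- The generator `x_i`. -/
noncomputable def gen19x (p q : ℕ) (i : Fin p) : FreeAb19 p q :=
  Finsupp.single (Sum.inl i) 1

/-- The generator `y_j`. -/
noncomputable def gen19y (p q : ℕ) (j : Fin q) : FreeAb19 p q :=
  Finsupp.single (Sum.inr (Sum.inl j)) 1

/-- The generator `z_j`. -/
noncomputable def gen19z (p q : ℕ) (j : Fin q) : FreeAb19 p q :=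
  Finsupp.single (Sum.inr (Sum.inr j)) 1

/-- The subgroup of relations: it is generated by the elements `2x₁ − 2x_i` for
`2 ≤ i ≤ p`, the elements `2x₁ − (y_j + z_j)` for `1 ≤ j ≤ q`, and the element
`2x₁ − (x₁ + ⋯ + x_p + (y₁ + z₁) + ⋯ + (y_q + z_q))`. -/
noncomputable def rels19 (p q : ℕ) (hp : 0 < p) : AddSubgroup (FreeAb19 p q) :=
  AddSubgroup.closure
    ({a | ∃ i : Fin p, i ≠ ⟨0, hp⟩ ∧
        a = 2 • gen19x p q ⟨0, hp⟩ - 2 • gen19x p q i} ∪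
      {a | ∃ j : Fin q,
        a = 2 • gen19x p q ⟨0, hp⟩ - (gen19y p q j + gen19z p q j)} ∪
      {2 • gen19x p q ⟨0, hp⟩ -
        (∑ i : Fin p, gen19x p q i + ∑ j : Fin q, (gen19y p q j + gen19z p q j))})

/-!
Write `p = m + 2`, `a = x₁` and `eᵢ = xᵢ - a`. The relations say that each `eᵢ` is killed by `2`,
that `z_j = 2a - y_j`, and that `(n - 2)a + ∑ eᵢ = 0`. The last relation eliminates `e_p`, and then
`2e_p = 0` becomes `(2n - 4)a = 0`. So in every abelian group a solution `(x, y, z)` of the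
relations amounts to arbitrary elements `y_j` together with `a` killed by `2n - 4` and
`e₂, …, e_{p-1}` killed by `2`: the presented group and `ℤ^q × ℤ/(2n - 4) × (ℤ/2)^m` have the same
universal property.
-/

section ZMod

variable {A : Type*} [AddGroup A]

/-- The homomorphism `ℤ/n →+ A` sending `1` to an element `a` killed by `n`. -/
def zmodLift (n : ℕ) (a : A) (ha : n • a = 0) : ZMod n →+ A :=
  ZMod.lift n ⟨zmultiplesHom A a, by simpa using ha⟩

@[simp]
lemma zmodLift_one {n : ℕ} {a : A} (ha : n • a = 0) : zmodLift n a ha 1 = a := by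
  simpa using! ZMod.lift_coe n ⟨zmultiplesHom A a, by simpa using ha⟩ 1

lemma zmod_addMonoidHom_ext {n : ℕ} {f g : ZMod n →+ A} (h : f 1 = g 1) : f = g := by
  ext k
  obtain ⟨k, rfl⟩ := ZMod.intCast_surjective k
  rw [← zsmul_one, map_zsmul, map_zsmul, h]

end ZMod

/-- The group `ℤ^κ × ℤ/N × (ℤ/d)^ι`, the model for the presented group. -/
abbrev CyclicSum (κ ι : Type*) (N d : ℕ) : Type _ := (κ → ℤ) × ZMod N × (ι → ZMod d)

namespace CyclicSum

variable {A : Type*} [AddCommGroup A]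

section Generators

variable {κ ι : Type*} {N d : ℕ}

/-- The standard generators of the factor `ℤ^κ`. -/
def freeGen [DecidableEq κ] (j : κ) : CyclicSum κ ι N d := (Pi.single j 1, 0, 0)

/-- The standard generator of the factor `ℤ/N`. -/
def cyclicGen : CyclicSum κ ι N d := (0, 1, 0)

/-- The standard generators of the factor `(ℤ/d)^ι`. -/
def torsionGen [DecidableEq ι] (i : ι) : CyclicSum κ ι N d := (0, 0, Pi.single i 1)

lemma nsmul_cyclicGen : N • (cyclicGen : CyclicSum κ ι N d) = 0 := by
  simp [cyclicGen]

lemma nsmul_torsionGen [DecidableEq ι] (i : ι) :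
    d • (torsionGen i : CyclicSum κ ι N d) = 0 := by
  simp [torsionGen, ← Pi.single_smul]

lemma addMonoidHom_ext [DecidableEq κ] [DecidableEq ι] [Finite κ] [Finite ι]
    {f g : CyclicSum κ ι N d →+ A}
    (free : ∀ j, f (freeGen j) = g (freeGen j)) (cyclic : f cyclicGen = g cyclicGen)
    (torsion : ∀ i, f (torsionGen i) = g (torsionGen i)) : f = g := by
  have inl_eq : f.comp (.inl _ _) = g.comp (.inl _ _) :=
    AddMonoidHom.functions_ext' _ _ _ fun j => AddMonoidHom.ext_int (free j)
  have inr_inl_eq : (f.comp (.inr _ _)).comp (.inl _ _) = (g.comp (.inr _ _)).comp (.inl _ _) :=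
    zmod_addMonoidHom_ext cyclic
  have inr_inr_eq : (f.comp (.inr _ _)).comp (.inr _ _) = (g.comp (.inr _ _)).comp (.inr _ _) :=
    AddMonoidHom.functions_ext' _ _ _ fun i => zmod_addMonoidHom_ext (torsion i)
  have inr_eq : f.comp (.inr _ _) = g.comp (.inr _ _) := by
    rw [← AddMonoidHom.coprod_unique (f.comp _), inr_inl_eq, inr_inr_eq,
      AddMonoidHom.coprod_unique]
  rw [← AddMonoidHom.coprod_unique f, inl_eq, inr_eq, AddMonoidHom.coprod_unique]

end Generators

section Lift

variable {κ ι : Type*} [Fintype κ] [Fintype ι] {N d : ℕ}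
  (y : κ → A) (a : A) (e : ι → A) (ha : N • a = 0) (he : ∀ i, d • e i = 0)

/-- The homomorphism out of `ℤ^κ × ℤ/N × (ℤ/d)^ι` with prescribed values on the standard
generators. -/
def lift : CyclicSum κ ι N d →+ A :=
  (AddMonoidHom.noncommPiCoprod (fun j => zmultiplesHom A (y j))
      fun _ _ _ _ _ => AddCommute.all _ _).coprod
    ((zmodLift N a ha).coprod
      (AddMonoidHom.noncommPiCoprod (fun i => zmodLift d (e i) (he i))
        fun _ _ _ _ _ => AddCommute.all _ _))

@[simp]
lemma lift_cyclicGen : lift y a e ha he cyclicGen = a := by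
  simp [lift, cyclicGen]

@[simp]
lemma lift_freeGen [DecidableEq κ] (j : κ) : lift y a e ha he (freeGen j) = y j := by
  simpa [lift, freeGen] using
    AddMonoidHom.noncommPiCoprod_single (N := fun _ => ℤ) (fun j => zmultiplesHom A (y j)) j 1

@[simp]
lemma lift_torsionGen [DecidableEq ι] (i : ι) : lift y a e ha he (torsionGen i) = e i := by
  simpa [lift, torsionGen] using
    AddMonoidHom.noncommPiCoprod_single (fun i => zmodLift d (e i) (he i)) i 1

end Lift

end CyclicSum

lemma forall_fin_add_two {m : ℕ} {P : Fin (m + 2) → Prop} :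
    (∀ i, P i) ↔ P 0 ∧ (∀ i : Fin m, P i.castSucc.succ) ∧ P (Fin.last (m + 1)) := by
  rw [Fin.forall_fin_succ, Fin.forall_fin_succ', Fin.succ_last]

lemma sum_fin_add_two {M : Type*} [AddCommMonoid M] {m : ℕ} (f : Fin (m + 2) → M) :
    ∑ i, f i = f 0 + (∑ i : Fin m, f i.castSucc.succ + f (Fin.last (m + 1))) := by
  rw [Fin.sum_univ_succ, Fin.sum_univ_castSucc, Fin.succ_last]

section Relations

variable {A B ι κ : Type*} [AddCommGroup A] [AddCommGroup B] [Fintype ι] [Fintype κ]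

/-- The families `x`, `y`, `z` satisfy the relations of the presented group in their symmetric
form: each `2xᵢ` and each `y_j + z_j` equals the sum of all the elements. -/
structure SatisfiesRels (x : ι → A) (y z : κ → A) : Prop where
  two_nsmul_eq_sum : ∀ i, 2 • x i = ∑ i, x i + ∑ j, (y j + z j)
  add_eq_sum : ∀ j, y j + z j = ∑ i, x i + ∑ j, (y j + z j)

lemma satisfiesRels_iff_base {x : ι → A} {y z : κ → A} (i₀ : ι) :
    SatisfiesRels x y z ↔ (∀ i, 2 • x i = 2 • x i₀) ∧ (∀ j, y j + z j = 2 • x i₀) ∧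
      ∑ i, x i + ∑ j, (y j + z j) = 2 • x i₀ := by
  constructor
  · rintro ⟨hx, hyz⟩
    exact ⟨fun i => (hx i).trans (hx i₀).symm, fun j => (hyz j).trans (hx i₀).symm, (hx i₀).symm⟩
  · rintro ⟨hx, hyz, hsum⟩
    exact ⟨fun i => (hx i).trans hsum.symm, fun j => (hyz j).trans hsum.symm⟩

variable {m : ℕ}

/-- The family `x₁, …, x_{m+2}` recovered from `a = x₁` and `eᵢ = xᵢ - x₁` for the `m` middle
indices `i`; the last entry is the one forced by `k a + ∑ eᵢ + (x_{m+2} - a) = 0`, where `k` stands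
for `n - 2`. -/
def xOfCoords (k : ℕ) (a : A) (e : Fin m → A) : Fin (m + 2) → A :=
  Fin.cons a (Fin.snoc (α := fun _ => A) (fun i => a + e i) (a - k • a - ∑ i, e i))

section Coords

variable (k : ℕ) (a : A) (e : Fin m → A)

@[simp]
lemma xOfCoords_zero : xOfCoords k a e 0 = a := rfl

@[simp]
lemma xOfCoords_succ_castSucc (i : Fin m) : xOfCoords k a e i.castSucc.succ = a + e i := by
  rw [xOfCoords, Fin.cons_succ, Fin.snoc_castSucc]

@[simp]
lemma xOfCoords_last : xOfCoords k a e (Fin.last (m + 1)) = a - k • a - ∑ i, e i := by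
  rw [xOfCoords, ← Fin.succ_last, Fin.cons_succ, Fin.snoc_last]

lemma comp_xOfCoords (f : A →+ B) :
    f ∘ xOfCoords k a e = xOfCoords k (f a) (f ∘ e) := by
  simp [funext_iff, forall_fin_add_two]

lemma sum_xOfCoords : ∑ i, xOfCoords k a e i = (m + 2) • a - k • a := by
  simp only [sum_fin_add_two, xOfCoords_zero, xOfCoords_succ_castSucc, xOfCoords_last,
    Finset.sum_add_distrib, Finset.sum_const, Finset.card_univ, Fintype.card_fin]
  module

end Coords

lemma two_nsmul_xOfCoords {k : ℕ} {a : A} {e : Fin m → A} (ha : (2 * k) • a = 0)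
    (he : ∀ i, 2 • e i = 0) (i : Fin (m + 2)) : 2 • xOfCoords k a e i = 2 • a := by
  have two_nsmul_sum : 2 • ∑ i, e i = 0 := by simp [Finset.smul_sum, he]
  revert i
  refine forall_fin_add_two.2 ⟨rfl, fun i => ?_, ?_⟩
  · rw [xOfCoords_succ_castSucc, nsmul_add, he, add_zero]
  · rw [xOfCoords_last, nsmul_sub, nsmul_sub, two_nsmul_sum, ← mul_nsmul', ha, sub_zero, sub_zero]

lemma satisfiesRels_xOfCoords {a : A} {e : Fin m → A} (y : κ → A)
    (ha : (2 * (m + 2 * Fintype.card κ)) • a = 0) (he : ∀ i, 2 • e i = 0) :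
    SatisfiesRels (xOfCoords (m + 2 * Fintype.card κ) a e) y (fun j => 2 • a - y j) := by
  refine (satisfiesRels_iff_base 0).2 ⟨fun i => ?_, fun j => add_sub_cancel _ _, ?_⟩
  · rw [two_nsmul_xOfCoords ha he, two_nsmul_xOfCoords ha he]
  · simp only [sum_xOfCoords, add_sub_cancel, Finset.sum_const, Finset.card_univ,
      two_nsmul_xOfCoords ha he]
    module

namespace SatisfiesRels

lemma two_nsmul_sub {x : ι → A} {y z : κ → A} (h : SatisfiesRels x y z) (i i' : ι) :
    2 • (x i - x i') = 0 := by
  rw [nsmul_sub, h.two_nsmul_eq_sum, h.two_nsmul_eq_sum, sub_self]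

lemma eq_two_nsmul_sub {x : ι → A} {y z : κ → A} (h : SatisfiesRels x y z) (i : ι) (j : κ) :
    z j = 2 • x i - y j := by
  rw [h.two_nsmul_eq_sum, ← h.add_eq_sum j, add_sub_cancel_left]

variable {x : Fin (m + 2) → A} {y z : κ → A}

lemma eq_xOfCoords (h : SatisfiesRels x y z) :
    x = xOfCoords (m + 2 * Fintype.card κ) (x 0) (fun i => x i.castSucc.succ - x 0) := by
  obtain ⟨-, hyz, hsum⟩ := (satisfiesRels_iff_base 0).1 h
  refine funext <| forall_fin_add_two.2 ⟨rfl, fun i => ?_, ?_⟩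
  · rw [xOfCoords_succ_castSucc, add_sub_cancel]
  rw [xOfCoords_last]
  simp only [hyz, sum_fin_add_two, Finset.sum_const, Finset.card_univ] at hsum
  simp only [Finset.sum_sub_distrib, Finset.sum_const, Finset.card_univ, Fintype.card_fin]
  linear_combination (norm := module) hsum

lemma nsmul_eq_zero (h : SatisfiesRels x y z) : (2 * (m + 2 * Fintype.card κ)) • x 0 = 0 := by
  set k := m + 2 * Fintype.card κ
  set e : Fin m → A := fun i => x i.castSucc.succ - x 0
  have two_nsmul_sum : 2 • ∑ i, e i = 0 := by
    simp only [Finset.smul_sum, e, h.two_nsmul_sub, Finset.sum_const_zero]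
  have last_eq : x (Fin.last (m + 1)) = x 0 - k • x 0 - ∑ i, e i :=
    (congrFun h.eq_xOfCoords _).trans (xOfCoords_last ..)
  calc (2 * k) • x 0 = -(2 • (x (Fin.last (m + 1)) - x 0)) - 2 • ∑ i, e i := by
        rw [last_eq]; module
    _ = 0 := by rw [h.two_nsmul_sub, two_nsmul_sum, neg_zero, sub_zero]

end SatisfiesRels

end Relations

/-- The abelian group on the generators `x₁, …, x_p, y₁, z₁, …, y_q, z_q` subject to `rels19`. -/
abbrev Presented19 (p q : ℕ) (hp : 0 < p) : Type := FreeAb19 p q ⧸ rels19 p q hp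

namespace Presented19

open CyclicSum (freeGen cyclicGen torsionGen nsmul_cyclicGen nsmul_torsionGen lift_freeGen
  lift_cyclicGen lift_torsionGen)

variable {A : Type*} [AddCommGroup A] {p q : ℕ} {hp : 0 < p}

/-- The quotient map from the free abelian group. -/
noncomputable def mk (hp : 0 < p) : FreeAb19 p q →+ Presented19 p q hp := QuotientAddGroup.mk' _

lemma rels19_le_ker_iff {f : FreeAb19 p q →+ A} :
    rels19 p q hp ≤ f.ker ↔ SatisfiesRels (f ∘ gen19x p q) (f ∘ gen19y p q) (f ∘ gen19z p q) := by
  have drop_ne : (∀ i ≠ ⟨0, hp⟩, 2 • f (gen19x p q i) = 2 • f (gen19x p q ⟨0, hp⟩)) ↔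
      ∀ i, 2 • f (gen19x p q i) = 2 • f (gen19x p q ⟨0, hp⟩) :=
    ⟨fun h i => (eq_or_ne i ⟨0, hp⟩).elim (fun hi => by rw [hi]) (h i), fun h i _ => h i⟩
  rw [satisfiesRels_iff_base (⟨0, hp⟩ : Fin p), rels19, AddSubgroup.closure_le]
  simp only [Set.union_subset_iff, Set.ofPred_subset, Set.singleton_subset_iff, SetLike.mem_coe,
    AddMonoidHom.mem_ker, forall_exists_index, and_imp, @forall_comm (FreeAb19 p q), forall_eq,
    map_sub, map_add, map_nsmul, map_sum, sub_eq_zero,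
    eq_comm (a := 2 • f (gen19x p q ⟨0, hp⟩)), drop_ne, and_assoc, Function.comp_apply]

/-- The classes of the generators `xᵢ`. -/
noncomputable def x (hp : 0 < p) (i : Fin p) : Presented19 p q hp := mk hp (gen19x p q i)

/-- The classes of the generators `y_j`. -/
noncomputable def y (hp : 0 < p) (j : Fin q) : Presented19 p q hp := mk hp (gen19y p q j)

/-- The classes of the generators `z_j`. -/
noncomputable def z (hp : 0 < p) (j : Fin q) : Presented19 p q hp := mk hp (gen19z p q j)

lemma satisfiesRels : SatisfiesRels (x (q := q) hp) (y hp) (z hp) :=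
  rels19_le_ker_iff.1 (QuotientAddGroup.ker_mk' _).ge

lemma addMonoidHom_ext {f g : Presented19 p q hp →+ A} (hx : f ∘ x hp = g ∘ x hp)
    (hy : f ∘ y hp = g ∘ y hp) (hz : f ∘ z hp = g ∘ z hp) : f = g := by
  refine QuotientAddGroup.addMonoidHom_ext _ (Finsupp.addHom_ext' fun s => AddMonoidHom.ext_int ?_)
  rcases s with i | j | j
  exacts [congrFun hx i, congrFun hy j, congrFun hz j]

/-- The homomorphism from the free abelian group with prescribed values on the generators. -/
noncomputable def freeLift (x : Fin p → A) (y z : Fin q → A) : FreeAb19 p q →+ A :=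
  (Finsupp.linearCombination ℤ (Sum.elim x (Sum.elim y z))).toAddMonoidHom

section Lift

variable {a : Fin p → A} {b c : Fin q → A}

lemma freeLift_comp_gen19x : freeLift a b c ∘ gen19x p q = a := by
  ext; simp [freeLift, gen19x]

lemma freeLift_comp_gen19y : freeLift a b c ∘ gen19y p q = b := by
  ext; simp [freeLift, gen19y]

lemma freeLift_comp_gen19z : freeLift a b c ∘ gen19z p q = c := by
  ext; simp [freeLift, gen19z]

/-- The homomorphism out of the presented group given by a solution of the relations. -/
noncomputable def lift (hp : 0 < p) (h : SatisfiesRels a b c) : Presented19 p q hp →+ A :=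
  QuotientAddGroup.lift _ (freeLift a b c) <| rels19_le_ker_iff.2 <| by
    rwa [freeLift_comp_gen19x, freeLift_comp_gen19y, freeLift_comp_gen19z]

variable (h : SatisfiesRels a b c)

lemma lift_comp_x : lift hp h ∘ x hp = a := freeLift_comp_gen19x

lemma lift_comp_y : lift hp h ∘ y hp = b := freeLift_comp_gen19y

lemma lift_comp_z : lift hp h ∘ z hp = c := freeLift_comp_gen19z

end Lift

section Equiv

variable {m : ℕ} (q : ℕ) (hp : 0 < m + 2)

/-- The homomorphism onto the model sending `x₁` to the generator of `ℤ/(2n - 4)`, the differences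
`xᵢ - x₁` of the middle indices to the generators of `(ℤ/2)^m` and `y_j` to those of `ℤ^q`. -/
noncomputable def toCyclicSum :
    Presented19 (m + 2) q hp →+ CyclicSum (Fin q) (Fin m) (2 * (m + 2 * q)) 2 :=
  lift hp (a := xOfCoords (m + 2 * q) cyclicGen torsionGen) (b := freeGen)
    (c := fun j => 2 • cyclicGen - freeGen j) <| by
      have solves := satisfiesRels_xOfCoords (κ := Fin q) (freeGen (N := 2 * (m + 2 * q)))
        (by rw [Fintype.card_fin, nsmul_cyclicGen]) (nsmul_torsionGen (ι := Fin m))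
      rwa [Fintype.card_fin] at solves

/-- The inverse of `toCyclicSum`. -/
noncomputable def fromCyclicSum :
    CyclicSum (Fin q) (Fin m) (2 * (m + 2 * q)) 2 →+ Presented19 (m + 2) q hp :=
  CyclicSum.lift (y hp) (x hp 0) (fun i => x hp i.castSucc.succ - x hp 0)
    (by simpa only [Fintype.card_fin] using satisfiesRels.nsmul_eq_zero)
    (fun _ => satisfiesRels.two_nsmul_sub _ _)

lemma fromCyclicSum_comp_toCyclicSum :
    (fromCyclicSum q hp).comp (toCyclicSum q hp) = AddMonoidHom.id _ := by
  have from_torsionGen : fromCyclicSum q hp ∘ torsionGen =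
      fun i => x hp i.castSucc.succ - x hp 0 := funext fun i => lift_torsionGen ..
  have x_eq := (satisfiesRels (q := q) (hp := hp)).eq_xOfCoords
  rw [Fintype.card_fin] at x_eq
  refine addMonoidHom_ext ?_ ?_ ?_
  · calc fromCyclicSum q hp ∘ toCyclicSum q hp ∘ x hp
      _ = fromCyclicSum q hp ∘ xOfCoords (m + 2 * q) cyclicGen torsionGen := by
        rw [toCyclicSum, lift_comp_x]
      _ = xOfCoords (m + 2 * q) (x hp 0) (fun i => x hp i.castSucc.succ - x hp 0) := by
        rw [comp_xOfCoords, from_torsionGen, fromCyclicSum, lift_cyclicGen]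
      _ = x hp := x_eq.symm
  · calc fromCyclicSum q hp ∘ toCyclicSum q hp ∘ y hp
      _ = fromCyclicSum q hp ∘ freeGen := by rw [toCyclicSum, lift_comp_y]
      _ = y hp := funext fun j => lift_freeGen ..
  · calc fromCyclicSum q hp ∘ toCyclicSum q hp ∘ z hp
      _ = fromCyclicSum q hp ∘ fun j => 2 • cyclicGen - freeGen j := by
        rw [toCyclicSum, lift_comp_z]
      _ = fun j => 2 • x hp 0 - y hp j := by
        ext j; simp [fromCyclicSum, -nsmul_eq_mul]
      _ = z hp := funext fun j => (satisfiesRels.eq_two_nsmul_sub 0 j).symm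

lemma toCyclicSum_comp_fromCyclicSum :
    (toCyclicSum q hp).comp (fromCyclicSum q hp) = AddMonoidHom.id _ := by
  have to_x (i) : toCyclicSum q hp (x hp i) = xOfCoords (m + 2 * q) cyclicGen torsionGen i :=
    congrFun (lift_comp_x _) i
  have to_y (j) : toCyclicSum q hp (y hp j) = freeGen j := congrFun (lift_comp_y _) j
  refine CyclicSum.addMonoidHom_ext (fun j => ?_) ?_ (fun i => ?_)
  · simp [fromCyclicSum, to_y]
  · simp [fromCyclicSum, to_x]
  · simp [fromCyclicSum, to_x]

/-- The isomorphism of the presented group with `ℤ^q × ℤ/(2n - 4) × (ℤ/2)^m`, where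
`p = m + 2`. -/
noncomputable def equivCyclicSum :
    Presented19 (m + 2) q hp ≃+ CyclicSum (Fin q) (Fin m) (2 * (m + 2 * q)) 2 :=
  (toCyclicSum q hp).toAddEquiv (fromCyclicSum q hp) (fromCyclicSum_comp_toCyclicSum q hp)
    (toCyclicSum_comp_fromCyclicSum q hp)

end Equiv

end Presented19

/-- for `p ≥ 2`, `q ≥ 0` and `n = p + 2q ≥ 3`, the abelian group with
generators `x₁, …, x_p, y₁, z₁, …, y_q, z_q` and relations
`x₁² = ⋯ = x_p² = y₁z₁ = ⋯ = y_qz_q = x₁⋯x_p·y₁z₁⋯y_qz_q` is isomorphic to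
`ℤ^q × ℤ/(2n−4)ℤ × (ℤ/2ℤ)^{p−2}`. -/
theorem stmt19 (p q : ℕ) (hp : 2 ≤ p) (hn : 3 ≤ p + 2 * q) :
    Nonempty ((FreeAb19 p q ⧸ rels19 p q (by omega)) ≃+
      ((Fin q → ℤ) × ZMod (2 * (p + 2 * q) - 4) × (Fin (p - 2) → ZMod 2))) := by
  obtain ⟨m, rfl⟩ := Nat.exists_eq_add_of_le' hp
  have modulus_eq : 2 * (m + 2 + 2 * q) - 4 = 2 * (m + 2 * q) := by omega
  rw [modulus_eq]
  exact ⟨Presented19.equivCyclicSum q _⟩
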